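/- For all integers k ≥ 1, R ≥ 1 and n with 0 ≤ n < R, the matrix integral I_k(n;R) equals the binomial coefficient C(n + k² − 1, k² − 1). -/

import Mathlib

open MeasureTheory Polynomial

noncomputable instance (R : ℕ) : MeasurableSpace (Matrix.unitaryGroup (Fin R) ℂ) := borel _
instance (R : ℕ) : BorelSpace (Matrix.unitaryGroup (Fin R) ℂ) := ⟨rfl⟩

/-- The trace of the `j`-th exterior power of `θ`, i.e. the coefficient of `T^j` in
`det(I + T·θ)`. -/
noncomputable def extPowTrace (R : ℕ) (θ : Matrix.unitaryGroup (Fin R) ℂ) (j : ℕ) : ℂ :=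
  ((1 + (X : ℂ[X]) • (θ : Matrix (Fin R) (Fin R) ℂ).map C).det).coeff j

/-- The matrix integral `I_k(n;R)`: the integral over the unitary group `U(R)` of
`|∑_{n₁+⋯+n_k=n} ∏ᵢ Tr(Λ^{nᵢ} θ)|²`, with respect to the measure `μ` (which in the
theorems below is assumed to be the Haar probability measure). The summands with some
`nᵢ > R` vanish, since `det(I + T·θ)` has degree `R`. -/
noncomputable def matrixIntegral (k n R : ℕ)
    (μ : Measure (Matrix.unitaryGroup (Fin R) ℂ)) : ℝ :=
  ∫ θ, ‖∑ x ∈ Finset.Nat.antidiagonalTuple k n, ∏ i, extPowTrace R θ (x i)‖ ^ 2 ∂μ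

theorem exists_perm_comp_eq_of_card_fiber_eq {ι α : Type*} [Fintype ι] [DecidableEq α]
    {a b : ι → α}
    (h : ∀ i, (Finset.univ.filter fun j => a j = i).card
      = (Finset.univ.filter fun j => b j = i).card) :
    ∃ π : Equiv.Perm ι, a = b ∘ π := by
  have e : ∀ i, Nonempty ({j // a j = i} ≃ {j // b j = i}) := fun i =>
    Fintype.card_eq.1 (by simpa [Fintype.card_subtype] using h i)
  replace e := fun i => (e i).some
  refine ⟨(Equiv.sigmaFiberEquiv a).symm.trans
    ((Equiv.sigmaCongrRight e).trans (Equiv.sigmaFiberEquiv b)), ?_⟩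
  funext j
  exact ((e (a j)) ⟨j, rfl⟩).2.symm

theorem sum_card_fixed_functions (n : ℕ) (α : Type*) [Fintype α] [DecidableEq α] :
    ∑ σ : Equiv.Perm (Fin n), (Finset.univ.filter fun c : Fin n → α => c ∘ σ = c).card
      = n.factorial * (Fintype.card α + n - 1).choose n := by
  classical
  let G := (Equiv.Perm (Fin n))ᵈᵐᵃ
  let toSym : (Fin n → α) → Sym α n := fun c => ⟨Finset.univ.val.map c, by simp⟩
  have hiff : ∀ c d : Fin n → α, MulAction.orbitRel G (Fin n → α) c d ↔ toSym c = toSym d := by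
    intro c d
    rw [MulAction.orbitRel_apply, MulAction.mem_orbit_iff]
    constructor
    · rintro ⟨g, rfl⟩
      refine Subtype.ext ?_
      have : (Finset.univ.val.map (DomMulAct.mk.symm g : Equiv.Perm (Fin n))) = (Finset.univ : Finset (Fin n)).val :=
        Multiset.map_univ_val_equiv (DomMulAct.mk.symm g : Equiv.Perm (Fin n))
      change Multiset.map (d ∘ (DomMulAct.mk.symm g : Equiv.Perm (Fin n))) Finset.univ.val
        = Multiset.map d Finset.univ.val
      rw [← Multiset.map_map, this]
    · intro h
      have h' : Finset.univ.val.map c = Finset.univ.val.map d := congrArg Subtype.val h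
      obtain ⟨π, hπ⟩ := exists_perm_comp_eq_of_card_fiber_eq (a := c) (b := d) (fun i => by
        have := congrArg (Multiset.count i) h'
        simp only [Multiset.count_map] at this
        simpa [Finset.card_def, eq_comm] using this)
      exact ⟨DomMulAct.mk π, hπ.symm⟩
  have hsurj : Function.Surjective toSym := by
    rintro ⟨m, hm⟩
    induction m using Quotient.inductionOn with
    | h l =>
      have hl : l.length = n := by simpa using hm
      subst hl
      refine ⟨l.get, Subtype.ext ?_⟩
      simp [toSym]
  let e : MulAction.orbitRel.Quotient G (Fin n → α) ≃ Sym α n :=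
    (Quotient.congrRight (r' := Setoid.ker toSym) hiff).trans
      (Setoid.quotientKerEquivOfSurjective toSym hsurj)
  let : Fintype G := Fintype.ofEquiv _ (DomMulAct.mk (M := Equiv.Perm (Fin n)))
  have hB := MulAction.sum_card_fixedBy_eq_card_orbits_mul_card_group G (Fin n → α)
  rw [Fintype.card_congr e, Sym.card_sym_eq_choose, mul_comm,
    ← Fintype.card_congr (DomMulAct.mk (M := Equiv.Perm (Fin n))), Fintype.card_perm,
    Fintype.card_fin] at hB
  rw [← hB]
  refine Fintype.sum_equiv DomMulAct.mk _ _ fun σ => ?_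
  rw [← Fintype.card_subtype]
  exact Fintype.card_congr (Equiv.refl _)

theorem factorial_mul_sum_minors {I A : Type*} [Fintype I] [DecidableEq I] [CommRing A]
    (M : Matrix I I A) (n : ℕ) :
    (n.factorial : A) * ∑ s ∈ Finset.univ.powersetCard n,
      (M.submatrix (Subtype.val : s → I) (Subtype.val : s → I)).det
      = ∑ a : Fin n → I, (M.submatrix a a).det := by
  classical
  have h1 : ∑ a : Fin n → I, (M.submatrix a a).det
      = ∑ a ∈ Finset.univ.filter (fun a : Fin n → I => Function.Injective a),
          (M.submatrix a a).det := by
    refine (Finset.sum_filter_of_ne fun a _ ha => ?_).symm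
    by_contra hinj
    simp only [Function.Injective, not_forall] at hinj
    obtain ⟨i, j, hij, hne⟩ := hinj
    exact ha (Matrix.det_zero_of_row_eq hne (by ext; simp [hij]))
  rw [h1, ← Finset.sum_fiberwise_of_maps_to (t := Finset.univ.powersetCard n)
    (g := fun a => Finset.univ.image a) (fun a ha => by
      simp only [Finset.mem_filter, Finset.mem_univ, true_and] at ha
      simp [Finset.mem_powersetCard, Finset.card_image_of_injective _ ha]), Finset.mul_sum]
  refine Finset.sum_congr rfl fun s hs => ?_
  have hcard : s.card = n := (Finset.mem_powersetCard.1 hs).2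
  have hval : ∀ e : Fin n ≃ s, (M.submatrix (fun j => (e j : I)) (fun j => (e j : I))).det
      = (M.submatrix (Subtype.val : s → I) (Subtype.val : s → I)).det := fun e => by
    rw [← Matrix.det_submatrix_equiv_self e]; rfl
  have : ∑ e : Fin n ≃ s, (M.submatrix (fun j => (e j : I)) (fun j => (e j : I))).det
      = (n.factorial : A) *
        (M.submatrix (Subtype.val : s → I) (Subtype.val : s → I)).det := by
    simp only [hval, Finset.sum_const, Finset.card_univ, nsmul_eq_mul]
    rw [Fintype.card_equiv (Fintype.equivOfCardEq (by simp [hcard])), Fintype.card_fin]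
  rw [← this]
  refine Finset.sum_bij (fun e _ => fun j => (e j : I)) ?_ ?_ ?_ ?_
  · intro e _
    simp only [Finset.mem_filter, Finset.mem_univ, true_and]
    refine ⟨Subtype.val_injective.comp e.injective, ?_⟩
    ext x
    simp only [Finset.mem_image, Finset.mem_univ, true_and]
    exact ⟨fun ⟨j, hj⟩ => hj ▸ (e j).2, fun hx => ⟨e.symm ⟨x, hx⟩, by simp⟩⟩
  · intro e _ e' _ h
    ext j
    exact congrFun h j
  · intro a ha
    simp only [Finset.mem_filter, Finset.mem_univ, true_and] at ha
    obtain ⟨hinj, him⟩ := ha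
    have hmem : ∀ j, a j ∈ s := fun j => him ▸ Finset.mem_image_of_mem _ (Finset.mem_univ j)
    refine ⟨Equiv.ofBijective (fun j => (⟨a j, hmem j⟩ : s)) ?_, Finset.mem_univ _, rfl⟩
    rw [Fintype.bijective_iff_injective_and_card]
    exact ⟨fun i j h => hinj (congrArg Subtype.val h), by simp [hcard]⟩
  · intros; rfl

theorem sum_antidiagonalTuple_prod_coeff {A : Type*} [CommRing A] (p : A[X]) (k n : ℕ) :
    ∑ x ∈ Finset.Nat.antidiagonalTuple k n, ∏ i, p.coeff (x i) = (p ^ k).coeff n := by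
  rw [← Polynomial.coeff_coe, Polynomial.coe_pow, ← Fin.prod_const, PowerSeries.coeff_prod]
  refine Finset.sum_bij' (fun x _ => Finsupp.equivFunOnFinite.symm x)
    (fun y _ => Finsupp.equivFunOnFinite y) ?_ ?_ ?_ ?_ ?_
  · intro x hx
    simpa [Finset.Nat.mem_antidiagonalTuple, Finset.mem_finsuppAntidiag] using hx
  · intro y hy
    simpa [Finset.Nat.mem_antidiagonalTuple, Finset.mem_finsuppAntidiag] using hy
  · intros; simp
  · intros; simp
  · intros; simp

section TensorPower

variable {ι κ : Type*} [Fintype ι]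

/-- The matrix of `g^{⊗ ι}` in the standard basis, indexed by functions `ι → κ`. -/
noncomputable def tensorPower (ι : Type*) [Fintype ι] {κ : Type*} (g : Matrix κ κ ℂ) :
    Matrix (ι → κ) (ι → κ) ℂ :=
  Matrix.of fun a b => ∏ j, g (a j) (b j)

theorem tensorPower_apply (g : Matrix κ κ ℂ) (a b : ι → κ) :
    tensorPower ι g a b = ∏ j, g (a j) (b j) := rfl

theorem tensorPower_mul [DecidableEq ι] [Fintype κ] (g h : Matrix κ κ ℂ) :
    tensorPower ι (g * h) = tensorPower ι g * tensorPower ι h := by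
  ext a b
  simp only [tensorPower_apply, Matrix.mul_apply, ← Finset.prod_mul_distrib]
  rw [Finset.prod_univ_sum, Fintype.piFinset_univ]

theorem tensorPower_diagonal [DecidableEq κ] (t : κ → ℂ) :
    tensorPower ι (Matrix.diagonal t) = Matrix.diagonal fun a => ∏ j, t (a j) := by
  ext a b
  simp only [tensorPower_apply, Matrix.diagonal_apply]
  split_ifs with h
  · subst h; simp
  · obtain ⟨j, hj⟩ := Function.ne_iff.1 h
    exact Finset.prod_eq_zero (Finset.mem_univ j) (by simp [hj])

theorem tensorPower_one [DecidableEq κ] : tensorPower ι (1 : Matrix κ κ ℂ) = 1 := by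
  rw [← Matrix.diagonal_one, tensorPower_diagonal]
  simp

theorem tensorPower_conjTranspose (g : Matrix κ κ ℂ) :
    tensorPower ι g.conjTranspose = (tensorPower ι g).conjTranspose := by
  ext a b
  simp [tensorPower_apply]

/-- The matrix of the linear map `e_j ↦ e_{φ j}`. -/
noncomputable def functionMatrix [DecidableEq κ] (φ : κ → κ) : Matrix κ κ ℂ :=
  Matrix.of fun i j => if i = φ j then 1 else 0

theorem tensorPower_functionMatrix [DecidableEq κ] (φ : κ → κ) (a b : ι → κ) :
    tensorPower ι (functionMatrix φ) a b = if a = φ ∘ b then 1 else 0 := by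
  simp only [tensorPower_apply, functionMatrix, Matrix.of_apply]
  split_ifs with h
  · simp [h]
  · obtain ⟨j, hj⟩ := Function.ne_iff.1 h
    exact Finset.prod_eq_zero (Finset.mem_univ j) (by simpa using hj)

variable [Fintype κ] [DecidableEq κ]

theorem functionMatrix_eq_diagonal_mul_unitary (φ : κ → κ) :
    ∃ (d : κ → ℂ), ∃ U ∈ Matrix.unitaryGroup κ ℂ,
      functionMatrix φ = Matrix.diagonal d * U := by
  let N : κ → ℕ := fun i => (Finset.univ.filter fun j => i = φ j).card
  let d : κ → ℂ := fun i => (Real.sqrt (N i) : ℝ)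
  let v : κ → EuclideanSpace ℂ κ := fun i =>
    WithLp.toLp 2 fun j => (d i)⁻¹ * functionMatrix φ i j
  let s : Set κ := {i | N i ≠ 0}
  have hd : ∀ i, d i * d i = N i := fun i => by
    simp only [d, ← Complex.ofReal_mul, Real.mul_self_sqrt (Nat.cast_nonneg _)]
    simp
  have hv : Orthonormal ℂ (s.domRestrict v) := by
    rw [orthonormal_iff_ite]
    rintro ⟨i, hi⟩ ⟨i', hi'⟩
    simp only [Set.domRestrict_apply, v, PiLp.inner_apply, functionMatrix, Matrix.of_apply,
      Subtype.mk.injEq]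
    split_ifs with h
    · subst h
      have hdi : d i ≠ 0 := fun h0 => hi (by have := hd i; rw [h0] at this; simpa using this.symm)
      have : ∀ x, inner ℂ ((d i)⁻¹ * if i = φ x then (1 : ℂ) else 0)
          ((d i)⁻¹ * if i = φ x then (1 : ℂ) else 0)
          = (d i)⁻¹ * (d i)⁻¹ * if i = φ x then 1 else 0 := fun x => by
        split_ifs <;> simp [d, abs_of_nonneg (Real.sqrt_nonneg _), sq]
      simp only [this]
      rw [← Finset.mul_sum, Finset.sum_boole]
      change _ * (N i : ℂ) = 1
      rw [← hd i]
      field_simp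
    · refine Finset.sum_eq_zero fun x _ => ?_
      by_cases hx : i = φ x
      · simp [← hx, Ne.symm h]
      · simp [hx]
  obtain ⟨b, hb⟩ := hv.exists_orthonormalBasis_extension_of_card_eq (by simp)
  refine ⟨d, Matrix.of fun i j => b i j, ?_, ?_⟩
  · rw [Matrix.mem_unitaryGroup_iff]
    ext i i'
    have := orthonormal_iff_ite.1 b.orthonormal i' i
    rw [PiLp.inner_apply] at this
    simp only [RCLike.inner_apply] at this
    simp only [Matrix.mul_apply, Matrix.of_apply, Matrix.star_apply, Matrix.one_apply]
    rw [show (if i = i' then (1 : ℂ) else 0) = if i' = i then 1 else 0 by simp [eq_comm], ← this]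
    rfl
  · ext i j
    rw [Matrix.diagonal_mul, Matrix.of_apply]
    by_cases hi : N i = 0
    · have h0 : d i = 0 := by simp [d, hi]
      have : i ≠ φ j := fun h => by
        simp only [N, Finset.card_eq_zero, Finset.filter_eq_empty_iff] at hi
        exact hi (Finset.mem_univ j) h
      simp [functionMatrix, this, h0]
    · rw [hb i hi]
      have hdi : d i ≠ 0 := fun h0 => hi (by have := hd i; rw [h0] at this; simpa using this.symm)
      simp [v, hdi]

theorem exists_perm_of_commute_of_apply_ne_zero [DecidableEq ι] {X : Matrix (ι → κ) (ι → κ) ℂ}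
    (hX : ∀ U ∈ Matrix.unitaryGroup κ ℂ, Commute X (tensorPower ι U))
    {a b : ι → κ} (hab : X a b ≠ 0) : ∃ π : Equiv.Perm ι, a = b ∘ π := by
  refine exists_perm_comp_eq_of_card_fiber_eq fun i => ?_
  have hm : Fintype.card ι + 1 ≠ 0 := by omega
  have hz := Complex.isPrimitiveRoot_exp _ hm
  set z := Complex.exp (2 * Real.pi * Complex.I / ((Fintype.card ι + 1 : ℕ) : ℂ))
  have hzn : ‖z‖ = 1 := hz.norm'_eq_one hm
  let t : κ → ℂ := fun l => if l = i then z else 1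
  have hU : Matrix.diagonal t ∈ Matrix.unitaryGroup κ ℂ := by
    rw [Matrix.mem_unitaryGroup_iff, Matrix.star_eq_conjTranspose,
      Matrix.diagonal_conjTranspose, Matrix.diagonal_mul_diagonal, ← Matrix.diagonal_one]
    congr 1
    ext l
    simp only [t, Pi.star_apply]
    split_ifs
    · simp [Complex.mul_conj, Complex.normSq_eq_norm_sq, hzn]
    · simp
  have h := congrFun (congrFun (hX _ hU).eq a) b
  rw [tensorPower_diagonal, Matrix.mul_diagonal, Matrix.diagonal_mul, mul_comm] at h
  have h' := mul_right_cancel₀ hab h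
  simp only [t, Finset.prod_ite, Finset.prod_const, one_pow, mul_one] at h'
  exact (hz.pow_inj (Nat.lt_succ_of_le (Finset.card_le_univ _))
    (Nat.lt_succ_of_le (Finset.card_le_univ _)) h').symm

theorem commute_tensorPower_functionMatrix [DecidableEq ι] {X : Matrix (ι → κ) (ι → κ) ℂ}
    (hX : ∀ U ∈ Matrix.unitaryGroup κ ℂ, Commute X (tensorPower ι U)) (φ : κ → κ) :
    Commute X (tensorPower ι (functionMatrix φ)) := by
  obtain ⟨d, U, hU, h⟩ := functionMatrix_eq_diagonal_mul_unitary φ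
  rw [h, tensorPower_mul]
  refine Commute.mul_right ?_ (hX U hU)
  rw [tensorPower_diagonal]
  ext a b
  rw [Matrix.mul_diagonal, Matrix.diagonal_mul, mul_comm]
  by_cases hab : X a b = 0
  · simp [hab]
  · obtain ⟨π, rfl⟩ := exists_perm_of_commute_of_apply_ne_zero hX hab
    congr 1
    exact (Equiv.prod_comp π fun j => d (b j)).symm

/-- A matrix commuting with all `U^{⊗ ι}` is a combination of permutation operators, provided that
`ι` embeds into the index set of `U`. -/
theorem apply_eq_sum_perm_of_commute [DecidableEq ι] {X : Matrix (ι → κ) (ι → κ) ℂ}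
    (hX : ∀ U ∈ Matrix.unitaryGroup κ ℂ, Commute X (tensorPower ι U))
    {u : ι → κ} (hu : Function.Injective u) (a c : ι → κ) :
    X a c = ∑ π : Equiv.Perm ι, X (u ∘ π) u * if a = c ∘ π then 1 else 0 := by
  obtain ⟨φ, hφ⟩ : ∃ φ : κ → κ, φ ∘ u = c :=
    ⟨Function.extend u c id, funext fun j => hu.extend_apply c id j⟩
  have h := congrFun (congrFun (commute_tensorPower_functionMatrix hX φ).eq a) u
  simp only [Matrix.mul_apply, tensorPower_functionMatrix, hφ, mul_ite, mul_one, mul_zero,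
    Finset.sum_ite_eq', Finset.mem_univ, if_true, ite_mul, one_mul, zero_mul] at h
  rw [h]
  simp only [mul_ite, mul_one, mul_zero]
  subst hφ
  symm
  refine Finset.sum_of_injOn (fun π : Equiv.Perm ι => u ∘ π) ?_ (by simp) ?_ ?_
  · intro π _ π' _ h
    ext j
    exact hu (congrFun h j)
  · intro b _ hb
    split_ifs
    · by_contra hne
      obtain ⟨π, rfl⟩ := exists_perm_of_commute_of_apply_ne_zero hX hne
      exact hb ⟨π, by simp, rfl⟩
    · rfl
  · intro π _
    rfl

end TensorPower

section Haar

variable {R : ℕ} {ι : Type*} [Fintype ι] (μ : Measure (Matrix.unitaryGroup (Fin R) ℂ))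

theorem continuous_tensorPower_apply (a b : ι → Fin R) :
    Continuous fun θ : Matrix.unitaryGroup (Fin R) ℂ => tensorPower ι (θ : Matrix _ _ ℂ) a b :=
  continuous_finsetProd _ fun j _ => continuous_subtype_val.matrix_elem (a j) (b j)

theorem norm_tensorPower_apply_le_one (θ : Matrix.unitaryGroup (Fin R) ℂ) (a b : ι → Fin R) :
    ‖tensorPower ι (θ : Matrix _ _ ℂ) a b‖ ≤ 1 := by
  rw [tensorPower_apply, norm_prod]
  exact Finset.prod_le_one (fun _ _ => norm_nonneg _)
    fun j _ => entry_norm_bound_of_unitary θ.2 (a j) (b j)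

theorem integrable_tensorPower_mul_conj [IsFiniteMeasure μ] (a b c d : ι → Fin R) :
    Integrable (fun θ : Matrix.unitaryGroup (Fin R) ℂ =>
      tensorPower ι (θ : Matrix _ _ ℂ) a b * star (tensorPower ι (θ : Matrix _ _ ℂ) c d)) μ := by
  refine Integrable.of_bound (C := 1) ?_ (Filter.Eventually.of_forall fun θ => ?_)
  · exact ((continuous_tensorPower_apply a b).mul
      (continuous_tensorPower_apply c d).star).aestronglyMeasurable
  · rw [norm_mul, norm_star]
    exact mul_le_one₀ (norm_tensorPower_apply_le_one θ a b) (norm_nonneg _)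
      (norm_tensorPower_apply_le_one θ c d)

/-- The average over the unitary group of `θ^{⊗ ι} E_{b,d} (θ^{⊗ ι})*`, where `E_{b,d}` is the
matrix unit. -/
noncomputable def twirl (b d : ι → Fin R) : Matrix (ι → Fin R) (ι → Fin R) ℂ :=
  Matrix.of fun a c => ∫ θ : Matrix.unitaryGroup (Fin R) ℂ,
    tensorPower ι (θ : Matrix _ _ ℂ) a b * star (tensorPower ι (θ : Matrix _ _ ℂ) c d) ∂μ

theorem commute_twirl [DecidableEq ι] [μ.IsMulLeftInvariant] [IsFiniteMeasure μ]
    (b d : ι → Fin R) (V : Matrix (Fin R) (Fin R) ℂ) (hV : V ∈ Matrix.unitaryGroup (Fin R) ℂ) :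
    Commute (twirl μ b d) (tensorPower ι V) := by
  have hinv : twirl μ b d
      = tensorPower ι V * twirl μ b d * (tensorPower ι V).conjTranspose := by
    ext a c
    have h := integral_mul_left_eq_self (μ := μ) (fun θ : Matrix.unitaryGroup (Fin R) ℂ =>
      tensorPower ι (θ : Matrix _ _ ℂ) a b * star (tensorPower ι (θ : Matrix _ _ ℂ) c d)) ⟨V, hV⟩
    rw [show twirl μ b d a c = _ from h.symm]
    have hexp : ∀ θ : Matrix.unitaryGroup (Fin R) ℂ,
        tensorPower ι (((⟨V, hV⟩ * θ : Matrix.unitaryGroup (Fin R) ℂ)) : Matrix _ _ ℂ) a b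
          * star (tensorPower ι (((⟨V, hV⟩ * θ : Matrix.unitaryGroup (Fin R) ℂ)) :
            Matrix _ _ ℂ) c d)
        = ∑ p, ∑ q, tensorPower ι V a p * star (tensorPower ι V c q)
          * (tensorPower ι (θ : Matrix _ _ ℂ) p b
            * star (tensorPower ι (θ : Matrix _ _ ℂ) q d)) := by
      intro θ
      simp only [Submonoid.coe_mul, tensorPower_mul, Matrix.mul_apply, star_sum, star_mul']
      rw [Finset.sum_mul_sum]
      exact Finset.sum_congr rfl fun p _ => Finset.sum_congr rfl fun q _ => by ring
    simp only [hexp]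
    rw [integral_finsetSum _ fun p _ => integrable_finsetSum _ fun q _ =>
      (integrable_tensorPower_mul_conj μ _ _ _ _).const_mul _]
    simp only [Matrix.mul_apply, Matrix.conjTranspose_apply, Finset.sum_mul]
    rw [Finset.sum_comm]
    refine Finset.sum_congr rfl fun p _ => ?_
    rw [integral_finsetSum _ fun q _ =>
      (integrable_tensorPower_mul_conj μ _ _ _ _).const_mul _]
    refine Finset.sum_congr rfl fun q _ => ?_
    rw [integral_const_mul]
    change _ * twirl μ b d p q = _
    ring
  have h1 : (tensorPower ι V).conjTranspose * tensorPower ι V = 1 := by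
    rw [← tensorPower_conjTranspose, ← tensorPower_mul, ← Matrix.star_eq_conjTranspose,
      Matrix.mem_unitaryGroup_iff'.1 hV, tensorPower_one]
  rw [Commute, SemiconjBy]
  conv_lhs => rw [hinv, Matrix.mul_assoc, h1, Matrix.mul_one]

/-- The trace of `θ^{⊗ ι}` composed with the permutation operator of `σ`, that is, the power sum
of `θ` attached to the cycle type of `σ`. -/
noncomputable def permTrace [DecidableEq ι] (σ : Equiv.Perm ι)
    (θ : Matrix.unitaryGroup (Fin R) ℂ) : ℂ :=
  ∑ b : ι → Fin R, tensorPower ι (θ : Matrix _ _ ℂ) (b ∘ σ) b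

theorem integral_permTrace_mul_star [DecidableEq ι] [μ.IsMulLeftInvariant]
    [IsProbabilityMeasure μ] {u : ι → Fin R} (hu : Function.Injective u) (σ τ : Equiv.Perm ι) :
    ∫ θ : Matrix.unitaryGroup (Fin R) ℂ, permTrace σ θ
      * star (permTrace τ θ) ∂μ
      = ∑ π : Equiv.Perm ι, if π * σ = τ * π then 1 else 0 := by
  have hexp : ∫ θ : Matrix.unitaryGroup (Fin R) ℂ, permTrace σ θ
      * star (permTrace τ θ) ∂μ
      = ∑ b : ι → Fin R, ∑ d : ι → Fin R, twirl μ b d (b ∘ σ) (d ∘ τ) := by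
    simp only [permTrace, star_sum, Finset.sum_mul_sum]
    rw [integral_finsetSum _ fun b _ => integrable_finsetSum _ fun d _ =>
      integrable_tensorPower_mul_conj μ _ _ _ _]
    refine Finset.sum_congr rfl fun b _ => ?_
    rw [integral_finsetSum _ fun d _ => integrable_tensorPower_mul_conj μ _ _ _ _]
    exact Finset.sum_congr rfl fun d _ => rfl
  have hcoef : ∀ π ρ : Equiv.Perm ι,
      ∑ d : ι → Fin R, twirl μ (d ∘ ρ) d (u ∘ π) u = if π = ρ then 1 else 0 := by
    intro π ρ
    have hθ : ∀ θ : Matrix.unitaryGroup (Fin R) ℂ,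
        ∑ d : ι → Fin R, tensorPower ι (θ : Matrix _ _ ℂ) (u ∘ π) (d ∘ ρ)
          * star (tensorPower ι (θ : Matrix _ _ ℂ) u d) = if π = ρ then 1 else 0 := by
      intro θ
      have h1 : tensorPower ι (θ : Matrix (Fin R) (Fin R) ℂ)
          * (tensorPower ι (θ : Matrix (Fin R) (Fin R) ℂ)).conjTranspose = 1 := by
        rw [← tensorPower_conjTranspose, ← tensorPower_mul, ← Matrix.star_eq_conjTranspose,
          Matrix.mem_unitaryGroup_iff.1 θ.2, tensorPower_one]
      have h2 := congrFun (congrFun h1 (u ∘ π ∘ ρ.symm)) u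
      rw [Matrix.mul_apply, Matrix.one_apply] at h2
      have h3 : (u ∘ π ∘ ρ.symm = u) ↔ π = ρ := by
        constructor
        · intro h
          ext j
          simpa using hu (congrFun h (ρ j))
        · rintro rfl
          ext j
          simp
      simp only [h3] at h2
      rw [← h2]
      refine Finset.sum_congr rfl fun d _ => ?_
      rw [Matrix.conjTranspose_apply]
      congr 1
      simp only [tensorPower_apply]
      exact Fintype.prod_equiv ρ _ _ fun j => by simp
    simp only [twirl, Matrix.of_apply]
    rw [← integral_finsetSum _ fun d _ => integrable_tensorPower_mul_conj μ _ _ _ _]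
    simp only [hθ]
    simp
  rw [hexp]
  simp_rw [fun b d : ι → Fin R => apply_eq_sum_perm_of_commute (commute_twirl μ b d) hu
    (b ∘ σ) (d ∘ τ)]
  rw [Finset.sum_comm]
  simp_rw [Finset.sum_comm (s := (Finset.univ : Finset (ι → Fin R)))
    (t := (Finset.univ : Finset (Equiv.Perm ι)))]
  refine Finset.sum_congr rfl fun π _ => ?_
  have hiff : π * σ = τ * π ↔ π = τ * π * σ⁻¹ := eq_mul_inv_iff_mul_eq.symm
  simp only [hiff]
  rw [← hcoef]
  refine Finset.sum_congr rfl fun d _ => ?_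
  rw [Finset.sum_eq_single (d ∘ (τ * π * σ⁻¹ : Equiv.Perm ι))]
  · rw [if_pos, mul_one]
    ext j
    simp
  · intro b _ hb
    rw [if_neg, mul_zero]
    intro h
    apply hb
    ext j
    have := congrFun h (σ⁻¹ j)
    simpa using congrArg Fin.val this
  · simp

end Haar

open scoped Kronecker in
theorem factorial_mul_sum_prod_extPowTrace (k n R : ℕ) (θ : Matrix.unitaryGroup (Fin R) ℂ) :
    (n.factorial : ℂ) * ∑ x ∈ Finset.Nat.antidiagonalTuple k n, ∏ i, extPowTrace R θ (x i)
      = ∑ σ : Equiv.Perm (Fin n), (Equiv.Perm.sign σ : ℂ)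
        * (Finset.univ.filter fun c : Fin n → Fin k => c ∘ σ = c).card
        * permTrace σ θ := by
  let M : Matrix (Fin R × Fin k) (Fin R × Fin k) ℂ := (θ : Matrix _ _ ℂ) ⊗ₖ 1
  have hdet : (1 + (X : ℂ[X]) • (θ : Matrix (Fin R) (Fin R) ℂ).map C).det ^ k
      = (1 + (X : ℂ[X]) • M.map C).det := by
    have : (1 + (X : ℂ[X]) • M.map C)
        = (1 + (X : ℂ[X]) • (θ : Matrix (Fin R) (Fin R) ℂ).map C)
          ⊗ₖ (1 : Matrix (Fin k) (Fin k) ℂ[X]) := by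
      rw [Matrix.add_kronecker, Matrix.one_kronecker_one, Matrix.smul_kronecker]
      congr 2
      ext1 i j
      simp only [M, Matrix.map_apply, Matrix.kroneckerMap_apply, Matrix.one_apply]
      split_ifs <;> simp
    rw [this, Matrix.det_kronecker]
    simp
  simp only [extPowTrace]
  rw [sum_antidiagonalTuple_prod_coeff, hdet, Matrix.coeff_det_one_add_X_smul_eq_sum_minors,
    factorial_mul_sum_minors]
  simp only [Matrix.det_apply']
  rw [Finset.sum_comm]
  refine Finset.sum_congr rfl fun σ _ => ?_
  rw [← Finset.mul_sum, mul_assoc]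
  congr 1
  rw [Fintype.sum_equiv (Equiv.arrowProdEquivProdArrow (Fin n) (fun _ => Fin R) (fun _ => Fin k)) _
    (fun p => (if p.2 ∘ σ = p.2 then 1 else 0) *
      tensorPower (Fin n) (θ : Matrix _ _ ℂ) (p.1 ∘ σ) p.1), Fintype.sum_prod_type_right]
  · rw [permTrace, ← Finset.sum_boole, Finset.sum_mul_sum]
  · intro a
    have h := congrFun (congrFun (tensorPower_one (ι := Fin n) (κ := Fin k))
      ((fun j => (a j).2) ∘ σ)) (fun j => (a j).2)
    rw [Matrix.one_apply] at h
    simp only [Equiv.arrowProdEquivProdArrow, Equiv.coe_fn_mk]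
    trans tensorPower (Fin n) (1 : Matrix (Fin k) (Fin k) ℂ)
        ((fun j => (a j).2) ∘ σ) (fun j => (a j).2)
      * tensorPower (Fin n) (θ : Matrix _ _ ℂ) ((fun j => (a j).1) ∘ σ) (fun j => (a j).1)
    · rw [tensorPower_apply, tensorPower_apply, ← Finset.prod_mul_distrib]
      refine Finset.prod_congr rfl fun j _ => ?_
      exact mul_comm _ _
    · rw [h]
      congr!

theorem card_fixed_conj {ι α : Type*} [Fintype ι] [DecidableEq ι] [Fintype α] [DecidableEq α]
    (σ π : Equiv.Perm ι) :
    (Finset.univ.filter fun c : ι → α => c ∘ (π * σ * π⁻¹ : Equiv.Perm ι) = c).card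
      = (Finset.univ.filter fun c : ι → α => c ∘ σ = c).card := by
  refine Finset.card_equiv (π.symm.arrowCongr (Equiv.refl α)) fun c => ?_
  simp only [Finset.mem_filter, Finset.mem_univ, true_and, funext_iff, Function.comp_apply,
    Equiv.arrowCongr_apply, Equiv.coe_refl, id, Equiv.symm_symm, Equiv.Perm.mul_apply]
  rw [← π.forall_congr_right]
  simp

theorem card_fixed_prod {ι α β : Type*} [Fintype ι] [DecidableEq ι] [Fintype α] [DecidableEq α]
    [Fintype β] [DecidableEq β] (σ : Equiv.Perm ι) :
    (Finset.univ.filter fun c : ι → α × β => c ∘ σ = c).card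
      = (Finset.univ.filter fun c : ι → α => c ∘ σ = c).card
        * (Finset.univ.filter fun c : ι → β => c ∘ σ = c).card := by
  rw [← Finset.card_product]
  refine Finset.card_equiv (Equiv.arrowProdEquivProdArrow ι (fun _ => α) (fun _ => β)) fun c => ?_
  simp [Equiv.arrowProdEquivProdArrow, funext_iff, Prod.ext_iff, forall_and]

theorem I_k_eq_choose_of_small_n (k R n : ℕ) (hk : 1 ≤ k) (hR : 1 ≤ R) (hn : n < R)
    (μ : Measure (Matrix.unitaryGroup (Fin R) ℂ))
    (hμ : μ.IsHaarMeasure) (hprob : IsProbabilityMeasure μ) :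
    matrixIntegral k n R μ = Nat.choose (n + k ^ 2 - 1) (k ^ 2 - 1) := by
  have hu : Function.Injective (Fin.castLE hn.le) := Fin.castLE_injective _
  let F : Equiv.Perm (Fin n) → ℂ := fun σ =>
    (Finset.univ.filter fun c : Fin n → Fin k => c ∘ σ = c).card
  let f : Matrix.unitaryGroup (Fin R) ℂ → ℂ := fun θ =>
    ∑ x ∈ Finset.Nat.antidiagonalTuple k n, ∏ i, extPowTrace R θ (x i)
  have hf : ∀ θ, (n.factorial : ℂ) * f θ = ∑ σ : Equiv.Perm (Fin n),
      (Equiv.Perm.sign σ : ℂ) * F σ * permTrace σ θ :=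
    factorial_mul_sum_prod_extPowTrace k n R
  have hfac : (n.factorial : ℂ) ≠ 0 := by exact_mod_cast n.factorial_ne_zero
  have hsq : ∀ θ, (n.factorial : ℂ) ^ 2 * ((‖f θ‖ ^ 2 : ℝ) : ℂ)
      = ∑ σ : Equiv.Perm (Fin n), ∑ τ : Equiv.Perm (Fin n),
        ((Equiv.Perm.sign σ : ℂ) * F σ * ((Equiv.Perm.sign τ : ℂ) * F τ))
          * (permTrace σ θ * star (permTrace τ θ)) := by
    intro θ
    have h1 : ((‖f θ‖ ^ 2 : ℝ) : ℂ) = f θ * star (f θ) := by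
      rw [← Complex.normSq_eq_norm_sq, ← Complex.mul_conj]; rfl
    have h2 : (n.factorial : ℂ) ^ 2 * (f θ * star (f θ))
        = ((n.factorial : ℂ) * f θ) * star ((n.factorial : ℂ) * f θ) := by
      rw [star_mul', star_natCast]; ring
    rw [h1, h2, hf, star_sum, Finset.sum_mul_sum]
    refine Finset.sum_congr rfl fun σ _ => Finset.sum_congr rfl fun τ _ => ?_
    simp only [star_mul', F, star_natCast, star_intCast]
    ring
  have hintegrable : ∀ σ τ : Equiv.Perm (Fin n), Integrable (fun θ : Matrix.unitaryGroup (Fin R) ℂ =>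
      permTrace σ θ * star (permTrace τ θ)) μ := by
    intro σ τ
    simp only [permTrace, star_sum, Finset.sum_mul_sum]
    exact integrable_finsetSum _ fun b _ => integrable_finsetSum _ fun d _ =>
      integrable_tensorPower_mul_conj μ _ _ _ _
  have key : (n.factorial : ℂ) ^ 2 * ((matrixIntegral k n R μ : ℝ) : ℂ)
      = (n.factorial : ℂ) ^ 2 * ((Nat.choose (n + k ^ 2 - 1) (k ^ 2 - 1) : ℝ) : ℂ) := by
    calc _ = ∫ θ, (n.factorial : ℂ) ^ 2 * ((‖f θ‖ ^ 2 : ℝ) : ℂ) ∂μ := by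
          rw [integral_const_mul, integral_complex_ofReal]; rfl
      _ = ∑ σ : Equiv.Perm (Fin n), ∑ τ : Equiv.Perm (Fin n),
          ((Equiv.Perm.sign σ : ℂ) * F σ * ((Equiv.Perm.sign τ : ℂ) * F τ))
            * ∑ π : Equiv.Perm (Fin n), if π * σ = τ * π then 1 else 0 := by
          simp only [hsq]
          rw [integral_finsetSum _ fun σ _ => integrable_finsetSum _ fun τ _ =>
            (hintegrable σ τ).const_mul _]
          refine Finset.sum_congr rfl fun σ _ => ?_
          rw [integral_finsetSum _ fun τ _ => (hintegrable σ τ).const_mul _]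
          refine Finset.sum_congr rfl fun τ _ => ?_
          rw [integral_const_mul, integral_permTrace_mul_star μ hu]
      _ = ∑ σ : Equiv.Perm (Fin n), ∑ π : Equiv.Perm (Fin n), F σ * F σ := by
          refine Finset.sum_congr rfl fun σ _ => ?_
          simp only [Finset.mul_sum]
          rw [Finset.sum_comm]
          refine Finset.sum_congr rfl fun π _ => ?_
          rw [Finset.sum_eq_single (π * σ * π⁻¹)]
          · have hF : F (π * σ * π⁻¹) = F σ := by
              simp only [F, card_fixed_conj]
            have hs : Equiv.Perm.sign (π * σ * π⁻¹) = Equiv.Perm.sign σ := by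
              rw [Equiv.Perm.sign_mul, Equiv.Perm.sign_mul, Equiv.Perm.sign_inv, mul_right_comm,
                Int.units_mul_self, one_mul]
            have hs2 : ((Equiv.Perm.sign σ : ℤ) : ℂ) * ((Equiv.Perm.sign σ : ℤ) : ℂ) = 1 := by
              rw [← Int.cast_mul, Int.units_coe_mul_self, Int.cast_one]
            rw [hF, hs, if_pos (by group), mul_one, mul_mul_mul_comm, hs2, one_mul]
          · intro τ _ hτ
            rw [if_neg, mul_zero]
            intro h
            exact hτ (eq_mul_inv_iff_mul_eq.2 h.symm)
          · simp
      _ = _ := by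
          have hB := sum_card_fixed_functions n (Fin k × Fin k)
          simp only [card_fixed_prod, Fintype.card_prod, Fintype.card_fin] at hB
          have hB' : ∑ σ : Equiv.Perm (Fin n), F σ * F σ
              = (n.factorial : ℂ) * ((k * k + n - 1).choose n : ℕ) := by
            simp only [F]
            exact_mod_cast hB
          have hpos : 1 ≤ k ^ 2 := Nat.one_le_pow _ _ hk
          have hch : (k * k + n - 1).choose n = (n + k ^ 2 - 1).choose (k ^ 2 - 1) := by
            rw [← sq, add_comm (k ^ 2) n]
            exact Nat.choose_symm_of_eq_add (by omega)
          simp only [Finset.sum_const, Finset.card_univ, Fintype.card_perm, Fintype.card_fin,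
            nsmul_eq_mul, ← Finset.mul_sum]
          rw [hB', hch]
          push_cast
          ring
  exact_mod_cast mul_left_cancel₀ (pow_ne_zero 2 hfac) key
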